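/- arXiv:2208.07610 — 2 statements merged into one kernel-verified Lean document; each statement's English description precedes it below -/
import Mathlib

section
/- Suppose the invariant models {P_g}_{g∈G} and {Q_g}_{g∈G} have densities with respect to a common σ-finite left-invariant measure ν on X. Then for all g, h ∈ G and every Borel probability measure Π on G, defining the translated prior Π̃ by Π̃(B) := Π(gh⁻¹B) for Borel B ⊆ G, one has KL(Q_g, Π-mixture of {P_{g'}}) = KL(Q_h, Π̃-mixture of {P_{g'}}). -/
open MeasureTheory ENNReal

open Classical in
/-- Kullback–Leibler divergence, valued in the extended reals. -/
noncomputable def KLdiv {α : Type*} [MeasurableSpace α] (μ ν : Measure α) : EReal :=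
  if μ ≪ ν ∧ Integrable (fun x => Real.log (μ.rnDeriv ν x).toReal) μ
  then ((∫ x, Real.log (μ.rnDeriv ν x).toReal ∂μ : ℝ) : EReal)
  else ⊤

/-!
The translation `x ↦ (g * h⁻¹) • x` is a measurable automorphism of `X`. It carries `Q_h` to `Q_g`,
and it carries the mixture of `{P_b}` over the translated prior to the mixture over the original
prior, since it sends `P_b` to `P_{g h⁻¹ b}`. Measurable embeddings preserve Radon–Nikodym
derivatives, hence also the divergence.
-/

section Embedding

variable {α β : Type*} [MeasurableSpace α] [MeasurableSpace β] {f : α → β} {μ ν : Measure α}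

theorem absolutelyContinuous_map_iff_of_measurableEmbedding (hf : MeasurableEmbedding f) :
    μ.map f ≪ ν.map f ↔ μ ≪ ν := by
  refine ⟨fun hmap s hs => ?_, hf.absolutelyContinuous_map⟩
  have preimage_image : f ⁻¹' (f '' s) = s := hf.injective.preimage_image s
  have null_image : ν.map f (f '' s) = 0 := by rwa [hf.map_apply, preimage_image]
  simpa only [hf.map_apply, preimage_image] using hmap null_image

theorem llr_map_comp_ae_eq_of_measurableEmbedding [SigmaFinite μ] [SigmaFinite ν]
    (hf : MeasurableEmbedding f) (hμν : μ ≪ ν) :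
    llr (μ.map f) (ν.map f) ∘ f =ᵐ[μ] llr μ ν := by
  filter_upwards [hμν.ae_le (hf.rnDeriv_map μ ν)] with x hx
  simp only [Function.comp_apply, llr_def, hx]

theorem KLdiv_map_of_measurableEmbedding [SigmaFinite μ] [SigmaFinite ν]
    (hf : MeasurableEmbedding f) : KLdiv (μ.map f) (ν.map f) = KLdiv μ ν := by
  have ac_iff : μ.map f ≪ ν.map f ↔ μ ≪ ν :=
    absolutelyContinuous_map_iff_of_measurableEmbedding hf
  by_cases hμν : μ ≪ ν
  · have llr_ae_eq := llr_map_comp_ae_eq_of_measurableEmbedding hf hμν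
    have integrable_iff : Integrable (llr (μ.map f) (ν.map f)) (μ.map f)
        ↔ Integrable (llr μ ν) μ :=
      hf.integrable_map_iff.trans (integrable_congr llr_ae_eq)
    have integral_eq : ∫ y, llr (μ.map f) (ν.map f) y ∂μ.map f = ∫ x, llr μ ν x ∂μ :=
      (hf.integral_map _).trans (integral_congr_ae llr_ae_eq)
    classical exact if_congr (and_congr ac_iff integrable_iff) (congrArg _ integral_eq) rfl
  · simp only [KLdiv, ac_iff, hμν, false_and, if_false]

end Embedding

section Mixture

variable {α β γ : Type*} [MeasurableSpace α] [MeasurableSpace β] [MeasurableSpace γ]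

-- `μ.map e` is the zero measure by convention when `e` is not a.e. measurable, so the relation
-- between `μ` and `ν` is expressed through images of measurable sets.
theorem map_eq_map_comp_of_measure_eq_image {e : α → β} (he : e.Surjective)
    {μ : Measure α} {ν : Measure β} (hμν : ∀ B, MeasurableSet B → μ B = ν (e '' B))
    {f : β → γ} (hf : Measurable f) (hfe : Measurable (f ∘ e)) : ν.map f = μ.map (f ∘ e) := by
  ext S hS
  rw [Measure.map_apply hf hS, Measure.map_apply hfe hS, hμν _ (hfe hS), Set.preimage_comp,
    Set.image_preimage_eq _ he]

theorem map_bind_eq_bind_map {m : Measure α} {κ : α → Measure β} (hκ : AEMeasurable κ m)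
    {f : β → γ} (hf : Measurable f) : (m.bind κ).map f = m.bind fun a => (κ a).map f := by
  have map_f_measurable : Measurable fun μ : Measure β => μ.map f := Measure.measurable_map f hf
  rw [Measure.bind, ← Measure.join_map_map hf,
    AEMeasurable.map_map_of_aemeasurable map_f_measurable.aemeasurable hκ]
  rfl

theorem isFiniteMeasure_bind_of_forall_measure_univ_le {m : Measure α} [IsFiniteMeasure m]
    {κ : α → Measure β} (hκ : AEMeasurable κ m) {C : ℝ≥0∞} (hC : C ≠ ∞)
    (hκC : ∀ a, κ a Set.univ ≤ C) : IsFiniteMeasure (m.bind κ) where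
  measure_univ_lt_top := calc
    m.bind κ Set.univ = ∫⁻ a, κ a Set.univ ∂m := Measure.bind_apply .univ hκ
    _ ≤ ∫⁻ _, C ∂m := lintegral_mono hκC
    _ < ∞ := lintegral_const_lt_top hC

end Mixture

section Action

theorem map_smul_map_smul {M X : Type*} [Monoid M] [MeasurableSpace X] [MulAction M X]
    [MeasurableConstSMul M X] (μ : Measure X) (k b : M) :
    (μ.map (b • ·)).map (k • ·) = μ.map ((k * b) • ·) := by
  rw [Measure.map_map (measurable_const_smul k) (measurable_const_smul b)]
  simp only [Function.comp_def, smul_smul]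

variable {G X : Type*} [Group G] [MeasurableSpace G] [MeasurableSpace X] [MulAction G X]
  [MeasurableConstSMul G X] {P : Measure X}

theorem map_smul_bind_map_smul_of_measure_eq_image
    (hP : Measurable fun b : G => P.map (b • ·)) {k : G} {π π' : Measure G}
    (hπ : ∀ B, MeasurableSet B → π' B = π ((k * ·) '' B)) :
    (π'.bind fun b => P.map (b • ·)).map (k • ·) = π.bind fun b => P.map (b • ·) := by
  have translate_measurable : Measurable fun b : G => P.map ((k * b) • ·) := by
    simpa only [Function.comp_def, map_smul_map_smul] using
      (Measure.measurable_map _ (measurable_const_smul k)).comp hP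
  calc (π'.bind fun b => P.map (b • ·)).map (k • ·)
      = π'.bind fun b => P.map ((k * b) • ·) := by
        simp only [map_bind_eq_bind_map hP.aemeasurable (measurable_const_smul k),
          map_smul_map_smul]
    _ = π.bind fun b => P.map (b • ·) :=
        congrArg Measure.join <| Eq.symm <|
          map_eq_map_comp_of_measure_eq_image (mul_left_surjective k) hπ hP translate_measurable

theorem klDiv_mixture_translate_general {Q : Measure X} [IsFiniteMeasure P] [SigmaFinite Q]
    (hP : Measurable fun b : G => P.map (b • ·)) (g h : G) {π π' : Measure G} [IsFiniteMeasure π']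
    (hπ : ∀ B, MeasurableSet B → π' B = π ((fun b => g * h⁻¹ * b) '' B)) :
    KLdiv (Q.map (g • ·)) (π.bind fun b => P.map (b • ·))
      = KLdiv (Q.map (h • ·)) (π'.bind fun b => P.map (b • ·)) := by
  have : IsFiniteMeasure (π'.bind fun b => P.map (b • ·)) :=
    isFiniteMeasure_bind_of_forall_measure_univ_le hP.aemeasurable (measure_ne_top P Set.univ)
      fun b => (Measure.map_apply (measurable_const_smul b) .univ).le
  have : SigmaFinite (Q.map (h • ·)) := (MeasurableEquiv.smul h).sigmaFinite_map
  have model_translate : (Q.map (h • ·)).map ((g * h⁻¹) • ·) = Q.map (g • ·) := by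
    rw [map_smul_map_smul, inv_mul_cancel_right]
  rw [← model_translate, ← map_smul_bind_map_smul_of_measure_eq_image hP hπ]
  exact KLdiv_map_of_measurableEmbedding (measurableEmbedding_const_smul (g * h⁻¹))

end Action

/-- **Translation invariance of the KL divergence to mixtures (key step in Proposition 5).**
If the invariant models `{P_g}` and `{Q_g}` are dominated by a common σ-finite
left-invariant measure `ν` on `X`, then for all `g, h ∈ G` and any prior `pri` on `G`,
with the translated prior `prit (B) = pri (g h⁻¹ B)`, one has
`KL(Q_g, pri-mixture of {P_{g'}}) = KL(Q_h, prit-mixture of {P_{g'}})`. -/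
theorem klDiv_mixture_translate
    {G : Type*} [Group G] [MeasurableSpace G]
    {X : Type*} [MeasurableSpace X] [MulAction G X]
    (hmeas : ∀ g : G, Measurable fun x : X => g • x)
    (ν : Measure X) [SigmaFinite ν]
    (hν : ∀ (g : G) (B : Set X), MeasurableSet B → ν ((g • ·) '' B) = ν B)
    (P Q : Measure X) [IsProbabilityMeasure P] [IsProbabilityMeasure Q]
    (p q : X → ℝ≥0∞) (hp : Measurable p) (hq : Measurable q)
    (hP : P = ν.withDensity p) (hQ : Q = ν.withDensity q)
    -- measurability of the null model as a kernel (mixtures are well defined)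
    (hPker : Measurable fun g : G => P.map (g • ·))
    (g h : G)
    (pri prit : Measure G) [IsProbabilityMeasure pri] [IsProbabilityMeasure prit]
    -- `prit` is the left translate of `pri` by `g h⁻¹`
    (hprit : ∀ B : Set G, MeasurableSet B → prit B = pri ((fun b => g * h⁻¹ * b) '' B)) :
    KLdiv (Q.map (g • ·)) (pri.bind fun g' => P.map (g' • ·))
      = KLdiv (Q.map (h • ·)) (prit.bind fun g' => P.map (g' • ·)) := by
  have : MeasurableConstSMul G X := ⟨hmeas⟩
  exact klDiv_mixture_translate_general hPker g h hprit
end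

section
/- Let (P_δ)_{δ∈Δ} be a family of probability measures on a measurable space M, each with density p_δ with respect to a common σ-finite measure μ, and let f : M → S be a measurable map that is a sufficient transformation in the Fisher–Neyman sense: there exist measurable functions g_δ : S → [0,∞) (for each δ) and h : M → [0,∞) such that p_δ(x) = g_δ(f(x))·h(x) for μ-almost every x. Then for any δ₀, δ₁ ∈ Δ, KL(P_{δ₁}, P_{δ₀}) = KL(f_*P_{δ₁}, f_*P_{δ₀}), i.e., the Kullback–Leibler divergence is unchanged by reducing the data through f. -/
open MeasureTheory ENNReal

/-!
Put `ν = h μ`. The factorization says `P δ = (g δ ∘ f) ν`, and a density of the form `g ∘ f` passes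
through the pushforward: `f_* P δ = g δ (f_* ν)`. Hence `P δ₁ ≪ P δ₀` holds exactly when
`f_* P δ₁ ≪ f_* P δ₀`, and in that case `g δ₁ / g δ₀` is the likelihood ratio downstairs while its
composition with `f` is the likelihood ratio upstairs. The two divergences thus integrate the same
function, before and after the change of variables along `f`.
-/

open ProbabilityTheory

section WithDensity

variable {α : Type*} [MeasurableSpace α] {ν : Measure α} {a b : α → ℝ≥0∞}

theorem ae_ne_top_of_sigmaFinite_withDensity (hb : AEMeasurable b ν)
    [SigmaFinite (ν.withDensity b)] : ∀ᵐ x ∂ν, b x ≠ ∞ := by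
  rw [← Measure.restrict_univ (μ := ν), ← iUnion_spanningSets (ν.withDensity b),
    ae_restrict_iUnion_iff]
  intro n
  have hfinite : ∫⁻ x in spanningSets (ν.withDensity b) n, b x ∂ν ≠ ∞ := by
    rw [← withDensity_apply _ (measurableSet_spanningSets _ n)]
    exact (measure_spanningSets_lt_top _ n).ne
  exact (ae_lt_top' hb.restrict hfinite).mono fun _ hx => hx.ne

theorem withDensity_absolutelyContinuous_withDensity_iff (ha : AEMeasurable a ν)
    (hb : AEMeasurable b ν) :
    ν.withDensity a ≪ ν.withDensity b ↔ ∀ᵐ x ∂ν, a x ≠ 0 → b x ≠ 0 := by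
  constructor
  · intro hac
    have hb_ne_zero : ∀ᵐ x ∂ν.withDensity b, b x ≠ 0 :=
      (ae_withDensity_iff' hb).2 (ae_of_all _ fun _ hx => hx)
    exact (ae_withDensity_iff' ha).1 (hac.ae_le hb_ne_zero)
  · intro hab
    refine Measure.ae_le_iff_absolutelyContinuous.1 fun s hs => ?_
    have hs' : ∀ᵐ x ∂ν, b x ≠ 0 → x ∈ s := (ae_withDensity_iff' hb).1 hs
    refine (ae_withDensity_iff' ha).2 ?_
    filter_upwards [hab, hs'] with x hx hxs hax using hxs (hx hax)

theorem withDensity_withDensity_div (ha : AEMeasurable a ν) (hb : AEMeasurable b ν)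
    (hb_top : ∀ᵐ x ∂ν, b x ≠ ∞) (hac : ν.withDensity a ≪ ν.withDensity b) :
    (ν.withDensity b).withDensity (a / b) = ν.withDensity a := by
  rw [← withDensity_mul₀ hb (ha.div hb)]
  refine withDensity_congr_ae ?_
  filter_upwards [hb_top, (withDensity_absolutelyContinuous_withDensity_iff ha hb).1 hac]
    with x hx_top hx_zero
  exact ENNReal.mul_div_cancel' (fun hbx => by_contra fun hax => hx_zero hax hbx)
    (fun hbx => absurd hbx hx_top)

end WithDensity

section Map

variable {α β : Type*} [MeasurableSpace α] [MeasurableSpace β] {ν : Measure α} {f : α → β}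
  {g g₀ g₁ : β → ℝ≥0∞}

theorem map_withDensity_comp (hf : Measurable f) (hg : Measurable g) :
    (ν.withDensity (g ∘ f)).map f = (ν.map f).withDensity g := by
  ext s hs
  rw [Measure.map_apply hf hs, withDensity_apply _ (hf hs), withDensity_apply _ hs,
    setLIntegral_map hs hg hf]
  rfl

theorem map_withDensity_comp_absolutelyContinuous_iff (hf : Measurable f) (hg₀ : Measurable g₀)
    (hg₁ : Measurable g₁) :
    (ν.withDensity (g₁ ∘ f)).map f ≪ (ν.withDensity (g₀ ∘ f)).map f ↔
      ν.withDensity (g₁ ∘ f) ≪ ν.withDensity (g₀ ∘ f) := by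
  refine ⟨fun hac => ?_, fun hac => hac.map hf⟩
  rw [map_withDensity_comp hf hg₀, map_withDensity_comp hf hg₁,
    withDensity_absolutelyContinuous_withDensity_iff hg₁.aemeasurable hg₀.aemeasurable] at hac
  exact (withDensity_absolutelyContinuous_withDensity_iff (hg₁.comp hf).aemeasurable
    (hg₀.comp hf).aemeasurable).2 (ae_of_ae_map hf.aemeasurable hac)

theorem llr_map_withDensity_comp [SigmaFinite (ν.map f)] (hf : Measurable f) (hg : Measurable g) :
    llr ((ν.withDensity (g ∘ f)).map f) (ν.map f) ∘ f =ᵐ[ν] llr (ν.withDensity (g ∘ f)) ν := by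
  have : SigmaFinite ν := .of_map ν hf.aemeasurable inferInstance
  have hdown : ((ν.withDensity (g ∘ f)).map f).rnDeriv (ν.map f) =ᵐ[ν.map f] g := by
    rw [map_withDensity_comp hf hg]
    exact Measure.rnDeriv_withDensity (ν.map f) hg
  filter_upwards [ae_of_ae_map hf.aemeasurable hdown, Measure.rnDeriv_withDensity ν (hg.comp hf)]
    with x hx_down hx_up
  simp only [llr_def, Function.comp_apply, hx_down, hx_up]

end Map

section KLdiv

variable {α β : Type*} [MeasurableSpace α] [MeasurableSpace β] {μ ν : Measure α} {f : α → β}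

theorem KLdiv_of_not_ac (hac : ¬ μ ≪ ν) : KLdiv μ ν = ⊤ :=
  if_neg fun h => hac h.1

theorem KLdiv_map_of_llr_map_ae_eq (hf : Measurable f) (hac : μ ≪ ν)
    (hllr : llr (μ.map f) (ν.map f) ∘ f =ᵐ[μ] llr μ ν) :
    KLdiv (μ.map f) (ν.map f) = KLdiv μ ν := by
  have hmeas : AEStronglyMeasurable (llr (μ.map f) (ν.map f)) (μ.map f) :=
    (stronglyMeasurable_llr _ _).aestronglyMeasurable
  have hintegrable : Integrable (llr (μ.map f) (ν.map f)) (μ.map f) ↔ Integrable (llr μ ν) μ :=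
    (integrable_map_measure hmeas hf.aemeasurable).trans (integrable_congr hllr)
  have hintegral : ∫ y, llr (μ.map f) (ν.map f) y ∂μ.map f = ∫ x, llr μ ν x ∂μ :=
    (integral_map hf.aemeasurable hmeas).trans (integral_congr_ae hllr)
  classical
  exact if_congr (and_congr (iff_of_true (hac.map hf) hac) hintegrable)
    (congrArg Real.toEReal hintegral) rfl

theorem KLdiv_map_withDensity_comp [SigmaFinite (ν.map f)] (hf : Measurable f)
    {g : β → ℝ≥0∞} (hg : Measurable g) :
    KLdiv ((ν.withDensity (g ∘ f)).map f) (ν.map f) = KLdiv (ν.withDensity (g ∘ f)) ν :=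
  have hac := withDensity_absolutelyContinuous ν (g ∘ f)
  KLdiv_map_of_llr_map_ae_eq hf hac (hac.ae_le (llr_map_withDensity_comp hf hg))

theorem KLdiv_map_withDensity_comp_withDensity_comp {g₀ g₁ : β → ℝ≥0∞}
    [SigmaFinite ((ν.withDensity (g₀ ∘ f)).map f)] (hf : Measurable f) (hg₀ : Measurable g₀)
    (hg₁ : Measurable g₁) :
    KLdiv ((ν.withDensity (g₁ ∘ f)).map f) ((ν.withDensity (g₀ ∘ f)).map f) =
      KLdiv (ν.withDensity (g₁ ∘ f)) (ν.withDensity (g₀ ∘ f)) := by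
  by_cases hac : ν.withDensity (g₁ ∘ f) ≪ ν.withDensity (g₀ ∘ f)
  · have : SigmaFinite (ν.withDensity (g₀ ∘ f)) := .of_map _ hf.aemeasurable inferInstance
    have hg₀f : AEMeasurable (g₀ ∘ f) ν := (hg₀.comp hf).aemeasurable
    have hratio : (ν.withDensity (g₀ ∘ f)).withDensity ((g₁ / g₀) ∘ f) = ν.withDensity (g₁ ∘ f) :=
      withDensity_withDensity_div (hg₁.comp hf).aemeasurable hg₀f
        (ae_ne_top_of_sigmaFinite_withDensity hg₀f) hac
    rw [← hratio, KLdiv_map_withDensity_comp hf (hg₁.div hg₀)]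
  · have hac_map := mt (map_withDensity_comp_absolutelyContinuous_iff hf hg₀ hg₁).1 hac
    rw [KLdiv_of_not_ac hac, KLdiv_of_not_ac hac_map]

end KLdiv

theorem klDiv_map_of_sufficient_general {M S : Type*} [MeasurableSpace M] [MeasurableSpace S]
    {μ P₀ P₁ : Measure M} {f : M → S} [SigmaFinite (P₀.map f)] (hf : Measurable f)
    {g₀ g₁ : S → ℝ≥0∞} (hg₀ : Measurable g₀) (hg₁ : Measurable g₁)
    {h : M → ℝ≥0∞} (hh : AEMeasurable h μ)
    (hP₀ : P₀ = μ.withDensity fun x => g₀ (f x) * h x)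
    (hP₁ : P₁ = μ.withDensity fun x => g₁ (f x) * h x) :
    KLdiv P₁ P₀ = KLdiv (P₁.map f) (P₀.map f) := by
  have withDensity_factor {g : S → ℝ≥0∞} (hg : Measurable g) :
      μ.withDensity (fun x => g (f x) * h x) = (μ.withDensity h).withDensity (g ∘ f) := by
    rw [← withDensity_mul₀ hh (hg.comp hf).aemeasurable, mul_comm]
    rfl
  obtain rfl := hP₀.trans (withDensity_factor hg₀)
  obtain rfl := hP₁.trans (withDensity_factor hg₁)
  exact (KLdiv_map_withDensity_comp_withDensity_comp hf hg₀ hg₁).symm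

/-- **Invariance of the KL divergence under sufficient transformations (key step in
Proposition 7).** If `(P δ)` is a family of probability measures with densities `p δ` with
respect to a common σ-finite measure `μ`, and `f` is sufficient in the Fisher–Neyman sense
(`p δ x = gd δ (f x) * h x` for `μ`-a.e. `x`), then the KL divergence is unchanged by
reducing the data through `f`: `KL(P δ₁, P δ₀) = KL(f_* P δ₁, f_* P δ₀)`. -/
theorem klDiv_map_of_sufficient
    {M S Δ : Type*} [MeasurableSpace M] [MeasurableSpace S]
    (μ : Measure M) [SigmaFinite μ]
    (P : Δ → Measure M) [∀ δ, IsProbabilityMeasure (P δ)]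
    (p : Δ → M → ℝ≥0∞) (hp : ∀ δ, Measurable (p δ))
    (hPdens : ∀ δ, P δ = μ.withDensity (p δ))
    (f : M → S) (hf : Measurable f)
    -- the Fisher–Neyman factorization
    (gd : Δ → S → ℝ≥0∞) (h : M → ℝ≥0∞)
    (hgd : ∀ δ, Measurable (gd δ)) (hh : Measurable h)
    (hfac : ∀ δ, p δ =ᵐ[μ] fun x => gd δ (f x) * h x)
    (δ₀ δ₁ : Δ) :
    KLdiv (P δ₁) (P δ₀) = KLdiv ((P δ₁).map f) ((P δ₀).map f) := by
  have hP δ : P δ = μ.withDensity fun x => gd δ (f x) * h x :=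
    (hPdens δ).trans (withDensity_congr_ae (hfac δ))
  exact klDiv_map_of_sufficient_general hf (hgd δ₀) (hgd δ₁) hh.aemeasurable (hP δ₀) (hP δ₁)
end
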